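/- Let n ≥ 1 and let K be a smooth, strictly convex body in ℝ^{n+1} with positive support function h. Define g : ℝ^{n+1}\{0} → ℝ by g(z) := log( h_K(z)^{n+2} · det(A(z/‖z‖) + (z/‖z‖)⊗(z/‖z‖)) · ‖z‖^{−(n+2)} ), a 0-homogeneous function whose restriction to S^n equals log(h^{n+2}/𝒦). Then for all w₁, w₂ ∈ ℝ^{n+1}: ∫_{S^n} ⟨∇g(x), w₁⟩·⟨x, w₂⟩·h(x)·det(A(x)+x⊗x) dθ(x) = 0; that is, ∫ ∇̄log(h^{n+2}/𝒦) ⊗ x dV = 0. -/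

import Mathlib

open MeasureTheory Metric Real
open scoped InnerProductSpace ENNReal Topology

noncomputable section

/-- Euclidean space `ℝ^{n+1}`. -/
abbrev Eu (n : ℕ) : Type := EuclideanSpace ℝ (Fin (n + 1))

/-- The unit sphere `S^n ⊆ ℝ^{n+1}` as a subtype. -/
abbrev Sph (n : ℕ) : Type := Metric.sphere (0 : Eu n) 1

/-- The spherical Lebesgue (surface) measure on `S^n`. -/
def sphMeas (n : ℕ) : Measure (Sph n) := (volume : Measure (Eu n)).toSphere

/-- The support function of a set `K ⊆ ℝ^{n+1}`. -/
def sfn {n : ℕ} (K : Set (Eu n)) (z : Eu n) : ℝ :=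
  sSup ((fun y => ⟪z, y⟫_ℝ) '' K)

/-- The Hessian endomorphism `A(x) = D(∇ h_K)(x)`. -/
def hessA {n : ℕ} (K : Set (Eu n)) (x : Eu n) : Eu n →L[ℝ] Eu n :=
  fderiv ℝ (gradient (sfn K)) x

/-- The rank-one endomorphism `x ⊗ x : v ↦ ⟨v, x⟩ x`. -/
def tens {n : ℕ} (x : Eu n) : Eu n →L[ℝ] Eu n :=
  (innerSL ℝ x).smulRight x

/-- `det (A(x) + x ⊗ x)`, the reciprocal Gauss curvature `1/𝒦` at `x ∈ S^n`. -/
def rK {n : ℕ} (K : Set (Eu n)) (x : Eu n) : ℝ :=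
  LinearMap.det ((hessA K x + tens x : Eu n →L[ℝ] Eu n) : Eu n →ₗ[ℝ] Eu n)

/-- `K` is a smooth, strictly convex body with positive support function. -/
structure IsSmoothConvexBody {n : ℕ} (K : Set (Eu n)) : Prop where
  compact : IsCompact K
  convex : Convex ℝ K
  interior_nonempty : (interior K).Nonempty
  pos : ∀ x : Sph n, 0 < sfn K x
  smooth : ContDiffOn ℝ (⊤ : ℕ∞) (sfn K) {(0 : Eu n)}ᶜ
  posdef : ∀ x : Sph n, ∀ v : Eu n, v ≠ 0 →
    0 < ⟪(hessA K (x : Eu n) + tens (x : Eu n)) v, v⟫_ℝ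

/-- The density `h·det(A + x⊗x)` of the measure `dV` with respect to `dθ`. -/
def dens {n : ℕ} (K : Set (Eu n)) (x : Eu n) : ℝ := sfn K x * rK K x

/-- The centroid-type point `c(K) = (∫ ∇h_K dV)/(∫ dV)`. -/
def cK {n : ℕ} (K : Set (Eu n)) : Eu n :=
  (∫ x : Sph n, dens K x ∂sphMeas n)⁻¹ •
    ∫ x : Sph n, dens K x • gradient (sfn K) x ∂sphMeas n

/-- The support function of the translated body `K - c(K)`. -/
def tsfn {n : ℕ} (K : Set (Eu n)) (x : Eu n) : ℝ := sfn K x - ⟪x, cK K⟫_ℝ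


/-- The 0-homogeneous extension of `log (h^{n+2}/𝒦)` to `ℝ^{n+1} \ {0}`. -/
def logEntropyDensity {n : ℕ} (K : Set (Eu n)) (z : Eu n) : ℝ :=
  Real.log (sfn K z ^ (n + 2) * rK K (‖z‖⁻¹ • z) * ‖z‖ ^ (-((n : ℝ) + 2)))

/-!
Let `F = h∇h` be the gradient of `h² / 2` and `φ = det DF`. On the sphere `φ = h ^ (n + 2) / 𝒦`, and
`φ` is 0-homogeneous, so the function under the gradient is `log φ`. With `u = h ^ (-(n + 1))` the
integrand becomes `u ⟪x, w₂⟫ Dφ(x) w₁`, because `u φ = h / 𝒦`.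

This is the divergence of the vector field `V = u φ ⟪y, w₂⟫ w₁ - u ⟪F, w₁⟫ φ (DF)⁻¹ w₂`: by the
Piola identity `φ (DF)⁻¹ w₂` is divergence free, and since `Du` is proportional to `⟪F, ·⟫` and
`⟪F z, v⟫ = ⟪z, DF(z) v⟫` (symmetry of `DF` and Euler's identity), all other terms cancel.

Finally, `V` is homogeneous of degree `-n`, and the divergence of such a field has integral zero
over the unit sphere of an `(n + 1)`-dimensional space.
-/

section Homogeneous

variable {E G : Type*} [NormedAddCommGroup E] [NormedSpace ℝ E]
  [NormedAddCommGroup G] [NormedSpace ℝ G] {j k : ℤ}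

/-- Positive homogeneity of integer degree `k`. It is required only away from the origin, where
functions of negative degree are singular. -/
def IsPosHomogeneous (k : ℤ) (f : E → G) : Prop :=
  ∀ c : ℝ, 0 < c → ∀ z ≠ 0, f (c • z) = c ^ k • f z

namespace IsPosHomogeneous

protected lemma const (v : G) : IsPosHomogeneous 0 fun _ : E ↦ v := fun c _ z _ ↦ by simp

protected lemma id : IsPosHomogeneous 1 fun z : E ↦ z := fun c _ z _ ↦ by simp

lemma clm_comp {H : Type*} [NormedAddCommGroup H] [NormedSpace ℝ H] {f : E → G}
    (L : G →L[ℝ] H) (hf : IsPosHomogeneous k f) : IsPosHomogeneous k fun z ↦ L (f z) :=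
  fun c hc z hz ↦ by simp only [hf c hc z hz, map_smul]

lemma sub {f g : E → G} (hf : IsPosHomogeneous k f) (hg : IsPosHomogeneous k g) :
    IsPosHomogeneous k fun z ↦ f z - g z :=
  fun c hc z hz ↦ by simp only [hf c hc z hz, hg c hc z hz, smul_sub]

lemma smul {f : E → ℝ} {g : E → G} (hf : IsPosHomogeneous j f) (hg : IsPosHomogeneous k g) :
    IsPosHomogeneous (j + k) fun z ↦ f z • g z :=
  fun c hc z hz ↦ by
    simp only [hf c hc z hz, hg c hc z hz, zpow_add₀ hc.ne', smul_eq_mul, smul_smul,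
      mul_right_comm]

lemma zpow {f : E → ℝ} (hf : IsPosHomogeneous k f) (m : ℤ) :
    IsPosHomogeneous (k * m) fun z ↦ f z ^ m :=
  fun c hc z hz ↦ by simp only [hf c hc z hz, smul_eq_mul, mul_zpow, zpow_mul]

protected lemma fderiv {f : E → G} (hf : IsPosHomogeneous k f) :
    IsPosHomogeneous (k - 1) (fderiv ℝ f) := by
  intro c hc z hz
  have hscale : (fun y ↦ f (c • y)) =ᶠ[𝓝 z] fun y ↦ c ^ k • f y :=
    (eventually_ne_nhds hz).mono (hf c hc)
  have hderiv : c • fderiv ℝ f (c • z) = c ^ k • fderiv ℝ f z := by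
    rw [← fderiv_comp_smul, hscale.fderiv_eq]
    exact congrFun (fderiv_const_smul_field (f := f) (c ^ k)) z
  rw [← inv_smul_smul₀ hc.ne' (fderiv ℝ f (c • z)), hderiv, smul_smul, zpow_sub_one₀ hc.ne',
    mul_comm]

lemma fderiv_self {f : E → G} (hf : IsPosHomogeneous k f) {z : E} (hz : z ≠ 0)
    (hd : DifferentiableAt ℝ f z) : fderiv ℝ f z z = (k : ℝ) • f z := by
  have hray : HasDerivAt (fun c : ℝ ↦ f (c • z)) (fderiv ℝ f z z) 1 := by
    have hline : HasDerivAt (fun c : ℝ ↦ c • z) z 1 := by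
      simpa using (hasDerivAt_id (1 : ℝ)).smul_const z
    exact HasFDerivAt.comp_hasDerivAt 1 (by simpa using hd.hasFDerivAt) hline
  have hpow : HasDerivAt (fun c : ℝ ↦ c ^ k • f z) ((k : ℝ) • f z) 1 := by
    simpa using (hasDerivAt_zpow k (1 : ℝ) (Or.inl one_ne_zero)).smul_const (f z)
  refine hray.unique (hpow.congr_of_eventuallyEq ?_)
  filter_upwards [lt_mem_nhds one_pos] with c hc using hf c hc z hz

lemma eq_norm_zpow_smul {f : E → G} (hf : IsPosHomogeneous k f) {z : E} (hz : z ≠ 0) :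
    f z = ‖z‖ ^ k • f (‖z‖⁻¹ • z) := by
  have hz' : ‖z‖ ≠ 0 := norm_ne_zero_iff.2 hz
  rw [hf _ (by positivity) z hz, smul_smul, ← mul_zpow, mul_inv_cancel₀ hz', one_zpow, one_smul]

end IsPosHomogeneous

lemma IsPosHomogeneous.ne_zero_of_sphere {f : E → G} (hf : IsPosHomogeneous k f)
    (hf₀ : ∀ x : sphere (0 : E) 1, f x ≠ 0) {z : E} (hz : z ≠ 0) : f z ≠ 0 := by
  rw [hf.eq_norm_zpow_smul hz]
  exact smul_ne_zero (zpow_ne_zero k (norm_ne_zero_iff.2 hz))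
    (hf₀ ⟨‖z‖⁻¹ • z, by simpa using norm_smul_inv_norm (𝕜 := ℝ) hz⟩)

protected lemma IsPosHomogeneous.gradient {E : Type*} [NormedAddCommGroup E] [InnerProductSpace ℝ E]
    [CompleteSpace E] {f : E → ℝ} (hf : IsPosHomogeneous k f) :
    IsPosHomogeneous (k - 1) (gradient f) :=
  fun c hc z hz ↦ by simp only [_root_.gradient, hf.fderiv c hc z hz, map_smulₛₗ, conj_trivial]

end Homogeneous

section Determinant

variable {E : Type*} [NormedAddCommGroup E] [NormedSpace ℝ E] [FiniteDimensional ℝ E]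

lemma contDiff_clm_det {m : WithTop ℕ∞} :
    ContDiff ℝ m (ContinuousLinearMap.det : (E →L[ℝ] E) → ℝ) := by
  let b := Module.finBasis ℝ E
  have hentry : ∀ i j, ContDiff ℝ m fun L : E →L[ℝ] E ↦ b.repr (L (b j)) i := fun i j ↦
    ((b.coord i).toContinuousLinearMap ∘L ContinuousLinearMap.apply ℝ E (b j)).contDiff
  have hsum : (ContinuousLinearMap.det : (E →L[ℝ] E) → ℝ) = fun L ↦
      ∑ σ : Equiv.Perm (Fin (Module.finrank ℝ E)),
        (Equiv.Perm.sign σ : ℝ) * ∏ i, b.repr (L (b i)) (σ i) := by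
    ext L
    rw [ContinuousLinearMap.det, ← LinearMap.det_toMatrix b, Matrix.det_apply']
    simp only [LinearMap.toMatrix_apply, ContinuousLinearMap.coe_coe]
  rw [hsum]
  fun_prop

lemma fderiv_clm_det_one (B : E →L[ℝ] E) :
    fderiv ℝ ContinuousLinearMap.det (1 : E →L[ℝ] E) B = LinearMap.trace ℝ E B := by
  have hline : HasLineDerivAt ℝ ContinuousLinearMap.det
      (fderiv ℝ ContinuousLinearMap.det (1 : E →L[ℝ] E) B) 1 B :=
    (contDiff_clm_det.differentiable one_ne_zero 1).hasFDerivAt.hasLineDerivAt B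
  refine HasDerivAt.unique (f := fun t : ℝ ↦ (1 + t • B).det) hline ?_
  let b := Module.finBasis ℝ E
  let M := LinearMap.toMatrix b b B
  obtain ⟨p, hp⟩ : ∃ p : Polynomial ℝ, ∀ t : ℝ,
      (1 + t • B).det = 1 + M.trace * t + p.eval t * t ^ 2 := by
    refine ⟨_, fun t ↦ Eq.trans ?_ (Matrix.det_one_add_smul t M)⟩
    rw [ContinuousLinearMap.det, ← LinearMap.det_toMatrix b]
    congr 1
    simp only [ContinuousLinearMap.toLinearMap_add, ContinuousLinearMap.toLinearMap_smul, map_add,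
      map_smul, M, ContinuousLinearMap.toLinearMap_one, LinearMap.toMatrix_one]
  have hpoly : HasDerivAt (fun t : ℝ ↦ 1 + M.trace * t + p.eval t * t ^ 2) M.trace 0 := by
    simpa using (((hasDerivAt_id (0 : ℝ)).const_mul M.trace).const_add 1).fun_add
      ((p.hasDerivAt 0).fun_mul (hasDerivAt_pow 2 (0 : ℝ)))
  rw [LinearMap.trace_eq_matrix_trace ℝ b]
  simpa only [hp] using hpoly

lemma fderiv_clm_det {M : E →L[ℝ] E} (hM : M.IsInvertible) (B : E →L[ℝ] E) :
    fderiv ℝ ContinuousLinearMap.det M B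
      = M.det * LinearMap.trace ℝ E (M.inverse ∘L B : E →L[ℝ] E) := by
  have hfactor : (ContinuousLinearMap.det : (E →L[ℝ] E) → ℝ) =
      fun L ↦ M.det * (M.inverse ∘L L).det := by
    ext L
    have hL : M ∘L (M.inverse ∘L L) = L := by
      rw [← ContinuousLinearMap.comp_assoc, hM.self_comp_inverse, ContinuousLinearMap.id_comp]
    conv_lhs => rw [← hL]
    exact LinearMap.det_comp _ _
  have hdet : HasFDerivAt ContinuousLinearMap.det
      (fderiv ℝ ContinuousLinearMap.det (1 : E →L[ℝ] E)) (M.inverse ∘L M) := by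
    rw [hM.inverse_comp_self]
    exact (contDiff_clm_det.differentiable one_ne_zero 1).hasFDerivAt
  have hcomp : HasFDerivAt (fun L : E →L[ℝ] E ↦ M.det * (M.inverse ∘L L).det) _ M :=
    (hdet.comp M (ContinuousLinearMap.compL ℝ E E E M.inverse).hasFDerivAt).const_mul M.det
  conv_lhs => rw [hfactor, hcomp.fderiv]
  simp only [smul_apply, ContinuousLinearMap.comp_apply,
    ContinuousLinearMap.compL_apply, fderiv_clm_det_one, smul_eq_mul]

end Determinant

section Divergence

variable {E : Type*} [NormedAddCommGroup E] [NormedSpace ℝ E]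

/-- The divergence of a vector field, as the trace of its derivative. -/
def divergence (V : E → E) (z : E) : ℝ := LinearMap.trace ℝ E (fderiv ℝ V z)

variable {z : E} {F : E → E}

lemma divergence_sub {V W : E → E} (hV : DifferentiableAt ℝ V z) (hW : DifferentiableAt ℝ W z) :
    divergence (fun y ↦ V y - W y) z = divergence V z - divergence W z := by
  simp only [divergence, fderiv_fun_sub hV hW, ContinuousLinearMap.toLinearMap_sub, map_sub]

lemma contDiffAt_inverse_fderiv_apply [CompleteSpace E] {m : WithTop ℕ∞}
    (hF : ContDiffAt ℝ (m + 1) F z) (hz : (fderiv ℝ F z).IsInvertible) (w : E) :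
    ContDiffAt ℝ m (fun y ↦ (fderiv ℝ F y).inverse w) z :=
  (hz.contDiffAt_map_inverse.comp z (hF.fderiv_right le_rfl)).clm_apply contDiffAt_const

lemma fderiv_inverse_fderiv_apply [CompleteSpace E] (hF : ContDiffAt ℝ 2 F z)
    (hz : (fderiv ℝ F z).IsInvertible) (w v : E) :
    fderiv ℝ (fun y ↦ (fderiv ℝ F y).inverse w) z v
      = -(fderiv ℝ F z).inverse (fderiv ℝ (fderiv ℝ F) z v ((fderiv ℝ F z).inverse w)) := by
  obtain ⟨N, -, hN, hNF, hderiv⟩ := exists_continuousLinearEquiv_fderiv_symm_eq hF hz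
  have hinv : (fun y ↦ (fderiv ℝ F y).inverse w) =ᶠ[𝓝 z]
      fun y ↦ ((N y).symm : E →L[ℝ] E) w := by
    filter_upwards [hNF] with y hy
    rw [← hy, ContinuousLinearMap.inverse_equiv]
  rw [hinv.fderiv_eq, fderiv_clm_apply (hN.differentiableAt one_ne_zero) (differentiableAt_const w),
    ← hNF.self_of_nhds, ContinuousLinearMap.inverse_equiv]
  simp [hderiv]

variable [FiniteDimensional ℝ E]

lemma divergence_smul {f : E → ℝ} {V : E → E} (hf : DifferentiableAt ℝ f z)
    (hV : DifferentiableAt ℝ V z) :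
    divergence (fun y ↦ f y • V y) z = f z * divergence V z + fderiv ℝ f z (V z) := by
  rw [divergence, fderiv_fun_smul hf hV, ContinuousLinearMap.toLinearMap_add, map_add,
    ContinuousLinearMap.toLinearMap_smul, map_smul, smul_eq_mul]
  congr 1
  exact LinearMap.trace_smulRight _ _

lemma divergence_smul_const {f : E → ℝ} (hf : DifferentiableAt ℝ f z) (w : E) :
    divergence (fun y ↦ f y • w) z = fderiv ℝ f z w := by
  rw [divergence_smul hf (differentiableAt_const w), divergence, fderiv_fun_const]
  simp

/-- The Piola transform of the constant vector field `w` under the map `F`. -/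
def piolaTransform (F : E → E) (w : E) (y : E) : E :=
  (fderiv ℝ F y).det • (fderiv ℝ F y).inverse w

lemma isInvertible_of_det_ne_zero {L : E →L[ℝ] E} (hL : L.det ≠ 0) : L.IsInvertible :=
  ⟨L.toContinuousLinearEquivOfDetNeZero hL, L.coe_toContinuousLinearEquivOfDetNeZero hL⟩

lemma contDiffAt_det_fderiv {m : WithTop ℕ∞} (hF : ContDiffAt ℝ (m + 1) F z) :
    ContDiffAt ℝ m (fun y ↦ (fderiv ℝ F y).det) z :=
  contDiff_clm_det.contDiffAt.comp z (hF.fderiv_right le_rfl)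

lemma contDiffAt_piolaTransform {m : WithTop ℕ∞} (hF : ContDiffAt ℝ (m + 1) F z)
    (hz : (fderiv ℝ F z).IsInvertible) (w : E) : ContDiffAt ℝ m (piolaTransform F w) z :=
  (contDiffAt_det_fderiv hF).smul (contDiffAt_inverse_fderiv_apply hF hz w)

/-- Symmetry of the second derivative turns the derivative of the inverse into the negative of the
logarithmic derivative of the determinant. -/
theorem divergence_piolaTransform (hF : ContDiffAt ℝ 2 F z)
    (hz : (fderiv ℝ F z).IsInvertible) (w : E) : divergence (piolaTransform F w) z = 0 := by
  set M := fderiv ℝ F z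
  have hdet : DifferentiableAt ℝ (fun y ↦ (fderiv ℝ F y).det) z :=
    (contDiffAt_det_fderiv (m := 1) hF).differentiableAt one_ne_zero
  have hinv : DifferentiableAt ℝ (fun y ↦ (fderiv ℝ F y).inverse w) z :=
    (contDiffAt_inverse_fderiv_apply (m := 1) hF hz w).differentiableAt one_ne_zero
  have hsymm (v : E) : fderiv ℝ (fderiv ℝ F) z v (M.inverse w)
      = fderiv ℝ (fderiv ℝ F) z (M.inverse w) v :=
    hF.isSymmSndFDerivAt (by simp) v (M.inverse w)
  have hdiv : divergence (fun y ↦ (fderiv ℝ F y).inverse w) z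
      = -LinearMap.trace ℝ E (M.inverse ∘L fderiv ℝ (fderiv ℝ F) z (M.inverse w) : E →L[ℝ] E) := by
    rw [divergence, ← map_neg]
    congr 1
    ext v
    simp only [ContinuousLinearMap.coe_coe, fderiv_inverse_fderiv_apply hF hz, hsymm, M,
      LinearMap.neg_apply, ContinuousLinearMap.comp_apply]
  have hfderiv_det : fderiv ℝ (fun y ↦ (fderiv ℝ F y).det) z (M.inverse w)
      = M.det *
        LinearMap.trace ℝ E (M.inverse ∘L fderiv ℝ (fderiv ℝ F) z (M.inverse w) : E →L[ℝ] E) := by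
    rw [fderiv_fun_comp z (contDiff_clm_det.differentiable one_ne_zero _)
      ((hF.fderiv_right (m := 1) le_rfl).differentiableAt one_ne_zero),
      ContinuousLinearMap.comp_apply, fderiv_clm_det hz]
  unfold piolaTransform
  rw [divergence_smul hdet hinv, hdiv, hfderiv_det]
  ring

end Divergence

section PolarIntegration

variable {E : Type*} [NormedAddCommGroup E] [NormedSpace ℝ E] [FiniteDimensional ℝ E]
  [MeasurableSpace E] [BorelSpace E] (μ : Measure E) [μ.IsAddHaarMeasure]

lemma integral_volumeIoiPow (m : ℕ) (q : ℝ → ℝ) :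
    ∫ r, q r ∂Measure.volumeIoiPow m = ∫ r in Set.Ioi (0 : ℝ), r ^ m * q r := by
  simp only [Measure.volumeIoiPow, ENNReal.ofReal]
  rw [integral_withDensity_eq_integral_smul
    (measurable_subtype_coe.pow_const _).real_toNNReal,
    integral_subtype_comap measurableSet_Ioi fun r ↦ (r ^ m).toNNReal • q r]
  refine setIntegral_congr_fun measurableSet_Ioi fun r hr ↦ ?_
  have hr : 0 ≤ r ^ m := pow_nonneg (le_of_lt hr) m
  simp only [NNReal.smul_def, coe_toNNReal _ hr, smul_eq_mul]

lemma integral_radial_mul_of_isPosHomogeneous {n : ℕ} (hE : Module.finrank ℝ E = n + 1) {k : ℤ}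
    {f : E → ℝ} (hf : IsPosHomogeneous k f) (χ : ℝ → ℝ) :
    ∫ z, χ ‖z‖ * f z ∂μ = (∫ x : sphere (0 : E) 1, f x ∂μ.toSphere) *
      ∫ r in Set.Ioi (0 : ℝ), χ r * r ^ (n + k) := by
  have : Nontrivial E := Module.nontrivial_of_finrank_pos (R := ℝ) (by lia)
  calc
    ∫ z, χ ‖z‖ * f z ∂μ = ∫ z : ({0}ᶜ : Set E), χ ‖(z : E)‖ * f z ∂μ.comap (↑) := by
      rw [integral_subtype_comap (measurableSet_singleton _).compl fun z ↦ χ ‖z‖ * f z,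
        restrict_compl_singleton]
    _ = ∫ z : ({0}ᶜ : Set E), f (homeomorphUnitSphereProd E z).1 *
          (χ (homeomorphUnitSphereProd E z).2 * (homeomorphUnitSphereProd E z).2 ^ k)
          ∂μ.comap (↑) := by
      congr 1
      ext z
      rw [hf.eq_norm_zpow_smul z.2, smul_eq_mul, homeomorphUnitSphereProd_apply_snd_coe,
        homeomorphUnitSphereProd_apply_fst_coe]
      ring
    _ = ∫ y : sphere (0 : E) 1 × Set.Ioi (0 : ℝ), f y.1 * (χ y.2 * y.2 ^ k)
          ∂μ.toSphere.prod (.volumeIoiPow n) := by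
      have := μ.measurePreserving_homeomorphUnitSphereProd
      rw [hE, Nat.add_sub_cancel] at this
      exact this.integral_comp (Homeomorph.measurableEmbedding _)
        fun y ↦ f y.1 * (χ y.2 * (y.2 : ℝ) ^ k)
    _ = (∫ x : sphere (0 : E) 1, f x ∂μ.toSphere) *
          ∫ r : Set.Ioi (0 : ℝ), χ r * r ^ k ∂.volumeIoiPow n :=
      integral_prod_mul (fun x : sphere (0 : E) 1 ↦ f x) fun r : Set.Ioi (0 : ℝ) ↦ χ r * r ^ k
    _ = _ := by
      rw [integral_volumeIoiPow n fun r ↦ χ r * r ^ k]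
      congr 1
      refine setIntegral_congr_fun measurableSet_Ioi fun r hr ↦ ?_
      rw [zpow_add₀ (ne_of_gt (Set.mem_Ioi.1 hr)), zpow_natCast]
      exact mul_left_comm _ _ _

variable {μ} in
lemma integral_fderiv_apply_eq_zero {f : E → ℝ} (hf : ContDiff ℝ 1 f) (hs : HasCompactSupport f)
    (w : E) : ∫ z, fderiv ℝ f z w ∂μ = 0 := by
  have hint : Integrable (fun z ↦ fderiv ℝ f z w) μ :=
    ((hf.continuous_fderiv one_ne_zero).clm_apply continuous_const).integrable_of_hasCompactSupport
      (hs.fderiv_apply ℝ w)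
  simpa using integral_mul_fderiv_eq_neg_fderiv_mul_of_integrable (μ := μ) (v := w)
    (f := fun _ : E ↦ (1 : ℝ)) (by simp) (by simpa using hint)
    (by simpa using hf.continuous.integrable_of_hasCompactSupport hs)
    (fun _ _ ↦ differentiableAt_const _) (fun z _ ↦ hf.differentiable one_ne_zero z)

end PolarIntegration

section SphereIntegral

variable {E : Type*} [NormedAddCommGroup E] [InnerProductSpace ℝ E]

lemma contDiff_radial_mul {m : WithTop ℕ∞} {χ : ℝ → ℝ} {f : E → ℝ} (hχ : ContDiff ℝ m χ)
    (hχ0 : (0 : ℝ) ∉ tsupport χ) (hf : ContDiffOn ℝ m f {0}ᶜ) :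
    ContDiff ℝ m fun z ↦ χ ‖z‖ * f z := by
  rw [contDiff_iff_contDiffAt]
  intro z
  by_cases hz : z = 0
  · have hzero : (fun z ↦ χ ‖z‖ * f z) =ᶠ[𝓝 z] fun _ ↦ 0 := by
      have hnorm : Filter.Tendsto norm (𝓝 z) (𝓝 (0 : ℝ)) := by
        simpa [hz] using (continuous_norm (E := E)).tendsto z
      filter_upwards [hnorm.eventually (notMem_tsupport_iff_eventuallyEq.1 hχ0)] with y hy
      rw [hy, Pi.zero_apply, zero_mul]
    exact contDiffAt_const.congr_of_eventuallyEq hzero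
  · exact (hχ.contDiffAt.comp z (contDiffAt_norm ℝ hz)).mul
      (hf.contDiffAt (isOpen_compl_singleton.mem_nhds hz))

lemma fderiv_radial_mul_apply {χ : ℝ → ℝ} {f : E → ℝ} {z : E} (hz : z ≠ 0)
    (hχ : DifferentiableAt ℝ χ ‖z‖) (hf : DifferentiableAt ℝ f z) (w : E) :
    fderiv ℝ (fun z ↦ χ ‖z‖ * f z) z w
      = χ ‖z‖ * fderiv ℝ f z w + deriv χ ‖z‖ * (fderiv ℝ norm z w * f z) := by
  have hnorm : DifferentiableAt ℝ norm z := (contDiffAt_norm ℝ hz).differentiableAt one_ne_zero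
  have hrad := hχ.hasDerivAt.comp_hasFDerivAt z hnorm.hasFDerivAt
  have hmul := (hrad.mul hf.hasFDerivAt).fderiv
  simp only [Function.comp_def, Pi.mul_def] at hmul
  rw [hmul]
  simp only [add_apply, smul_apply, smul_eq_mul]
  ring

variable [FiniteDimensional ℝ E]

lemma hasCompactSupport_radial_mul {χ : ℝ → ℝ} (hχ : HasCompactSupport χ) (f : E → ℝ) :
    HasCompactSupport fun z ↦ χ ‖z‖ * f z := by
  rw [hasCompactSupport_iff_eventuallyEq, Filter.coclosedCompact_eq_cocompact] at hχ ⊢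
  filter_upwards [(tendsto_norm_cocompact_atTop (E := E)).eventually
    (hχ.filter_mono atTop_le_cocompact)] with z hz
  rw [hz, Pi.zero_apply, Pi.zero_apply, zero_mul]

variable [MeasurableSpace E] [BorelSpace E] (μ : Measure E) [μ.IsAddHaarMeasure] {n : ℕ}

lemma integrable_radial_mul {χ : ℝ → ℝ} {f : E → ℝ} (hχ : Continuous χ)
    (hs : HasCompactSupport χ) (hχ0 : (0 : ℝ) ∉ tsupport χ) (hf : ContinuousOn f {0}ᶜ) :
    Integrable (fun z ↦ χ ‖z‖ * f z) μ :=
  (contDiff_radial_mul (contDiff_zero.2 hχ) hχ0 (contDiffOn_zero.2 hf)).continuous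
    |>.integrable_of_hasCompactSupport (hasCompactSupport_radial_mul hs f)

/-- Cutting `f` off radially and integrating over `E` leaves two terms in polar coordinates; the one
carrying `χ'` vanishes because its radial factor is `∫ χ' = 0`. -/
lemma integral_toSphere_fderiv_apply_mul_integral_Ioi (hE : Module.finrank ℝ E = n + 1)
    {f : E → ℝ} (hf : ContDiffOn ℝ 1 f {0}ᶜ) (hfh : IsPosHomogeneous (-n) f) (w : E)
    {χ : ℝ → ℝ} (hχ : ContDiff ℝ 1 χ) (hs : HasCompactSupport χ) (hχ0 : (0 : ℝ) ∉ tsupport χ) :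
    (∫ x : sphere (0 : E) 1, fderiv ℝ f x w ∂μ.toSphere) *
      ∫ r in Set.Ioi (0 : ℝ), χ r * r⁻¹ = 0 := by
  have : Nontrivial E := Module.nontrivial_of_finrank_pos (R := ℝ) (by lia)
  have hopen : IsOpen ({0}ᶜ : Set E) := isOpen_compl_singleton
  have hnormh : IsPosHomogeneous 1 (norm : E → ℝ) := fun c hc z _ ↦ by
    rw [norm_smul, norm_of_nonneg hc.le, zpow_one, smul_eq_mul]
  have hDf : Integrable (fun z ↦ χ ‖z‖ * fderiv ℝ f z w) μ :=
    integrable_radial_mul μ hχ.continuous hs hχ0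
      ((hf.continuousOn_fderiv_of_isOpen hopen le_rfl).clm_apply continuousOn_const)
  have hDχ : Integrable (fun z ↦ deriv χ ‖z‖ * (fderiv ℝ norm z w * f z)) μ := by
    refine integrable_radial_mul μ (hχ.continuous_deriv le_rfl) hs.deriv
      (fun h ↦ hχ0 (tsupport_deriv_subset h)) (.mul ?_ hf.continuousOn)
    have : ContDiffOn ℝ 1 (norm : E → ℝ) {0}ᶜ := fun z hz ↦ (contDiffAt_norm ℝ hz).contDiffWithinAt
    exact (this.continuousOn_fderiv_of_isOpen hopen le_rfl).clm_apply continuousOn_const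
  have hzero : ∫ z, (χ ‖z‖ * fderiv ℝ f z w + deriv χ ‖z‖ * (fderiv ℝ norm z w * f z)) ∂μ = 0 := by
    rw [← integral_fderiv_apply_eq_zero (μ := μ) (contDiff_radial_mul hχ hχ0 hf)
      (hasCompactSupport_radial_mul hs f) w]
    refine integral_congr_ae ?_
    filter_upwards [compl_mem_ae_iff.2 (measure_singleton (0 : E))] with z hz
    exact (fderiv_radial_mul_apply hz (hχ.differentiable one_ne_zero _)
      ((hf.differentiableOn one_ne_zero).differentiableAt (hopen.mem_nhds hz)) w).symm
  have hDfh : IsPosHomogeneous (-n - 1) fun z ↦ fderiv ℝ f z w :=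
    hfh.fderiv.clm_comp (ContinuousLinearMap.apply ℝ ℝ w)
  have hDχh : IsPosHomogeneous (1 - 1 + -n) fun z ↦ fderiv ℝ norm z w * f z :=
    (hnormh.fderiv.clm_comp (ContinuousLinearMap.apply ℝ ℝ w)).smul hfh
  have hχ' : ∫ r in Set.Ioi (0 : ℝ), deriv χ r * r ^ (n + (1 - 1 + -n) : ℤ) = 0 := by
    simpa [image_eq_zero_of_notMem_tsupport hχ0] using hs.integral_Ioi_deriv_eq hχ 0
  rw [integral_add hDf hDχ, integral_radial_mul_of_isPosHomogeneous μ hE hDfh,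
    integral_radial_mul_of_isPosHomogeneous μ hE hDχh, hχ', mul_zero, add_zero] at hzero
  simpa only [show (n : ℤ) + (-n - 1) = -1 by ring, zpow_neg_one] using hzero

lemma integral_toSphere_fderiv_apply_eq_zero (hE : Module.finrank ℝ E = n + 1) {f : E → ℝ}
    (hf : ContDiffOn ℝ 1 f {0}ᶜ) (hfh : IsPosHomogeneous (-n) f) (w : E) :
    ∫ x : sphere (0 : E) 1, fderiv ℝ f x w ∂μ.toSphere = 0 := by
  let ψ : ContDiffBump (2 : ℝ) := ⟨1 / 2, 1, by norm_num, by norm_num⟩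
  have hψ {r : ℝ} (hr : r ∉ Set.Ioi 0) : ψ r = 0 := by
    refine ψ.zero_of_le_dist (le_trans ?_ (neg_le_abs _))
    linarith [Set.notMem_Ioi.1 hr]
  have hχ0 : (0 : ℝ) ∉ tsupport fun r ↦ r * ψ r := fun h ↦ by
    have h2 : (0 : ℝ) ∈ closedBall 2 1 := ψ.tsupport_eq ▸ tsupport_mul_subset_right h
    norm_num at h2
  have hprod := integral_toSphere_fderiv_apply_mul_integral_Ioi μ hE hf hfh w
    (contDiff_id.mul ψ.contDiff) ψ.hasCompactSupport.mul_left hχ0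
  have hradial : 0 < ∫ r in Set.Ioi (0 : ℝ), r * ψ r * r⁻¹ :=
    calc
      0 < ∫ r, ψ r := ψ.integral_pos
      _ = ∫ r in Set.Ioi (0 : ℝ), ψ r :=
        (setIntegral_eq_integral_of_forall_compl_eq_zero fun r hr ↦ hψ hr).symm
      _ = ∫ r in Set.Ioi (0 : ℝ), r * ψ r * r⁻¹ :=
        setIntegral_congr_fun measurableSet_Ioi fun r hr ↦
          ((eq_mul_inv_iff_mul_eq₀ (ne_of_gt hr)).2 (mul_comm (ψ r) r))
  exact (mul_eq_zero.1 hprod).resolve_right hradial.ne'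

theorem integral_toSphere_divergence_eq_zero (hE : Module.finrank ℝ E = n + 1) {V : E → E}
    (hV : ContDiffOn ℝ 1 V {0}ᶜ) (hVh : IsPosHomogeneous (-n) V) :
    ∫ x : sphere (0 : E) 1, divergence V x ∂μ.toSphere = 0 := by
  let b := stdOrthonormalBasis ℝ E
  have hcoord (i) : ContDiffOn ℝ 1 (fun z ↦ ⟪b i, V z⟫_ℝ) {0}ᶜ := contDiffOn_const.inner ℝ hV
  have hdiv (x : sphere (0 : E) 1) :
      divergence V x = ∑ i, fderiv ℝ (fun z ↦ ⟪b i, V z⟫_ℝ) x (b i) := by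
    have hVd : DifferentiableAt ℝ V x := (hV.differentiableOn one_ne_zero).differentiableAt
      (isOpen_compl_singleton.mem_nhds (ne_zero_of_mem_unit_sphere x))
    rw [divergence, LinearMap.trace_eq_sum_inner _ b]
    refine Finset.sum_congr rfl fun i _ ↦ ?_
    exact congrArg (· (b i))
      ((innerSL ℝ (b i)).hasFDerivAt.comp (x : E) hVd.hasFDerivAt).fderiv.symm
  have hint (i) : Integrable
      (fun x : sphere (0 : E) 1 ↦ fderiv ℝ (fun z ↦ ⟪b i, V z⟫_ℝ) x (b i)) μ.toSphere := by
    have hfderiv := (hcoord i).continuousOn_fderiv_of_isOpen isOpen_compl_singleton le_rfl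
    have hcont := (hfderiv.clm_apply (continuousOn_const (c := b i))).comp_continuous
      continuous_subtype_val fun x : sphere (0 : E) 1 ↦ ne_zero_of_mem_unit_sphere x
    exact hcont.integrable_of_hasCompactSupport (.of_compactSpace _)
  simp only [hdiv]
  rw [integral_finsetSum _ fun i _ ↦ hint i]
  exact Finset.sum_eq_zero fun i _ ↦ integral_toSphere_fderiv_apply_eq_zero μ hE (hcoord i)
    (hVh.clm_comp (innerSL ℝ (b i))) (b i)

end SphereIntegral

section CentroAffineField

variable {E : Type*} [NormedAddCommGroup E] [InnerProductSpace ℝ E]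

/-- The vector field whose divergence produces the integrand of the centro-affine identity, for a
map `F` playing the role of `h∇h` and a function `u` playing the role of `h ^ (-(n + 1))`. -/
def centroAffineField (u : E → ℝ) (F : E → E) (w₁ w₂ y : E) : E :=
  (u y * ((fderiv ℝ F y).det * ⟪y, w₂⟫_ℝ)) • w₁ - (u y * ⟪F y, w₁⟫_ℝ) • piolaTransform F w₂ y

lemma IsPosHomogeneous.inner_const {F : E → E} {k : ℤ} (hF : IsPosHomogeneous k F) (w : E) :
    IsPosHomogeneous k fun y ↦ ⟪F y, w⟫_ℝ := fun c hc z hz ↦ by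
  simp only [hF c hc z hz, real_inner_smul_left, smul_eq_mul]

lemma IsPosHomogeneous.det_fderiv {F : E → E} (hF : IsPosHomogeneous 1 F) :
    IsPosHomogeneous 0 fun y ↦ (fderiv ℝ F y).det := fun c hc z hz ↦ by
  simp only [hF.fderiv c hc z hz, sub_self, zpow_zero, one_smul]

lemma IsPosHomogeneous.piolaTransform {F : E → E} (hF : IsPosHomogeneous 1 F) (w : E) :
    IsPosHomogeneous 0 (piolaTransform F w) := fun c hc z hz ↦ by
  simp only [_root_.piolaTransform, hF.fderiv c hc z hz, sub_self, zpow_zero, one_smul]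

lemma IsPosHomogeneous.centroAffineField {u : E → ℝ} {F : E → E} {k : ℤ}
    (hu : IsPosHomogeneous k u) (hF : IsPosHomogeneous 1 F) (w₁ w₂ : E) :
    IsPosHomogeneous (k + 1) (centroAffineField u F w₁ w₂) := by
  have h₁ := (hu.smul (hF.det_fderiv.smul (IsPosHomogeneous.id.inner_const w₂))).smul (.const w₁)
  have h₂ := (hu.smul (hF.inner_const w₁)).smul (hF.piolaTransform w₂)
  simp only [zero_add, add_zero] at h₁ h₂
  exact h₁.sub h₂

variable {z : E} {u : E → ℝ} {F : E → E}

lemma fderiv_inner_const {V : E → E} (hV : DifferentiableAt ℝ V z) (w v : E) :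
    fderiv ℝ (fun y ↦ ⟪V y, w⟫_ℝ) z v = ⟪fderiv ℝ V z v, w⟫_ℝ := by
  simp [fderiv_inner_apply ℝ hV (differentiableAt_const w)]

variable [FiniteDimensional ℝ E]

lemma contDiffAt_centroAffineField {m : WithTop ℕ∞} (hu : ContDiffAt ℝ m u z)
    (hF : ContDiffAt ℝ (m + 1) F z) (hz : (fderiv ℝ F z).IsInvertible) (w₁ w₂ : E) :
    ContDiffAt ℝ m (centroAffineField u F w₁ w₂) z :=
  ((hu.mul ((contDiffAt_det_fderiv hF).mul (contDiffAt_id.inner ℝ contDiffAt_const))).smul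
    contDiffAt_const).sub
    ((hu.mul ((hF.of_le le_self_add).inner ℝ contDiffAt_const)).smul
      (contDiffAt_piolaTransform hF hz w₂))

lemma divergence_mul_inner_smul_piolaTransform {k : ℝ} (hu : DifferentiableAt ℝ u z)
    (hDu : ∀ v, fderiv ℝ u z v = k * ⟪F z, v⟫_ℝ) (hF : ContDiffAt ℝ 2 F z)
    (hz : (fderiv ℝ F z).IsInvertible) (hFz : ∀ v, ⟪F z, v⟫_ℝ = ⟪z, fderiv ℝ F z v⟫_ℝ)
    (w₁ w₂ : E) :
    divergence (fun y ↦ (u y * ⟪F y, w₁⟫_ℝ) • piolaTransform F w₂ y) z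
      = (fderiv ℝ F z).det * (u z * ⟪w₁, w₂⟫_ℝ + k * ⟪F z, w₁⟫_ℝ * ⟪z, w₂⟫_ℝ) := by
  have hFd : DifferentiableAt ℝ F z := hF.differentiableAt two_ne_zero
  have hFw₁ : DifferentiableAt ℝ (fun y ↦ ⟪F y, w₁⟫_ℝ) z :=
    hFd.inner ℝ (differentiableAt_const w₁)
  have hpiola : DifferentiableAt ℝ (piolaTransform F w₂) z :=
    (contDiffAt_piolaTransform (m := 1) hF hz w₂).differentiableAt one_ne_zero
  rw [divergence_smul (hu.fun_mul hFw₁) hpiola, divergence_piolaTransform hF hz,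
    fderiv_fun_mul hu hFw₁, piolaTransform]
  simp only [add_apply, smul_apply, smul_eq_mul, map_smul, fderiv_inner_const hFd, hDu, hFz _,
    hz.self_apply_inverse, real_inner_comm w₁ w₂]
  ring

lemma divergence_centroAffineField {k : ℝ} (hu : DifferentiableAt ℝ u z)
    (hDu : ∀ v, fderiv ℝ u z v = k * ⟪F z, v⟫_ℝ) (hF : ContDiffAt ℝ 2 F z)
    (hz : (fderiv ℝ F z).IsInvertible) (hFz : ∀ v, ⟪F z, v⟫_ℝ = ⟪z, fderiv ℝ F z v⟫_ℝ)
    (w₁ w₂ : E) :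
    divergence (centroAffineField u F w₁ w₂) z
      = u z * ⟪z, w₂⟫_ℝ * fderiv ℝ (fun y ↦ (fderiv ℝ F y).det) z w₁ := by
  have hFd : DifferentiableAt ℝ F z := hF.differentiableAt two_ne_zero
  have hdet : DifferentiableAt ℝ (fun y ↦ (fderiv ℝ F y).det) z :=
    (contDiffAt_det_fderiv (m := 1) hF).differentiableAt one_ne_zero
  have hpiola : DifferentiableAt ℝ (piolaTransform F w₂) z :=
    (contDiffAt_piolaTransform (m := 1) hF hz w₂).differentiableAt one_ne_zero
  have hw₂ : DifferentiableAt ℝ (fun y : E ↦ ⟪y, w₂⟫_ℝ) z :=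
    differentiableAt_id.inner ℝ (differentiableAt_const w₂)
  have hFw₁ : DifferentiableAt ℝ (fun y ↦ ⟪F y, w₁⟫_ℝ) z :=
    hFd.inner ℝ (differentiableAt_const w₁)
  have hfst : divergence (fun y ↦ (u y * ((fderiv ℝ F y).det * ⟪y, w₂⟫_ℝ)) • w₁) z
      = u z * ⟪z, w₂⟫_ℝ * fderiv ℝ (fun y ↦ (fderiv ℝ F y).det) z w₁ +
        (fderiv ℝ F z).det * (u z * ⟪w₁, w₂⟫_ℝ + k * ⟪F z, w₁⟫_ℝ * ⟪z, w₂⟫_ℝ) := by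
    have hid := fderiv_inner_const differentiableAt_fun_id w₂ w₁ (z := z)
    rw [fderiv_fun_id, ContinuousLinearMap.id_apply] at hid
    rw [divergence_smul_const (hu.fun_mul (hdet.fun_mul hw₂)), fderiv_fun_mul hu (hdet.fun_mul hw₂),
      fderiv_fun_mul hdet hw₂]
    simp only [add_apply, smul_apply, smul_eq_mul, hid, hDu]
    ring
  unfold centroAffineField
  rw [divergence_sub ((hu.fun_mul (hdet.fun_mul hw₂)).fun_smul (differentiableAt_const w₁))
    ((hu.fun_mul hFw₁).fun_smul hpiola), hfst,
    divergence_mul_inner_smul_piolaTransform hu hDu hF hz hFz, add_sub_cancel_right]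

theorem integral_toSphere_mul_fderiv_det_fderiv_eq_zero [MeasurableSpace E] [BorelSpace E]
    (μ : Measure E) [μ.IsAddHaarMeasure] {n : ℕ} (hE : Module.finrank ℝ E = n + 1) {k : E → ℝ}
    (hu : ContDiffOn ℝ 1 u {0}ᶜ) (huh : IsPosHomogeneous (-n - 1) u)
    (hDu : ∀ z ≠ 0, ∀ v, fderiv ℝ u z v = k z * ⟪F z, v⟫_ℝ)
    (hF : ContDiffOn ℝ 2 F {0}ᶜ) (hFh : IsPosHomogeneous 1 F)
    (hdet : ∀ z ≠ 0, (fderiv ℝ F z).det ≠ 0)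
    (hFz : ∀ z ≠ 0, ∀ v, ⟪F z, v⟫_ℝ = ⟪z, fderiv ℝ F z v⟫_ℝ) (w₁ w₂ : E) :
    ∫ x : sphere (0 : E) 1, u x * ⟪(x : E), w₂⟫_ℝ *
      fderiv ℝ (fun y ↦ (fderiv ℝ F y).det) x w₁ ∂μ.toSphere = 0 := by
  have hmem (z : E) (hz : z ≠ 0) : ({0}ᶜ : Set E) ∈ 𝓝 z := isOpen_compl_singleton.mem_nhds hz
  have hinv (z : E) (hz : z ≠ 0) := isInvertible_of_det_ne_zero (hdet z hz)
  have hdiv (x : sphere (0 : E) 1) := by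
    have hx : (x : E) ≠ 0 := ne_zero_of_mem_unit_sphere x
    exact divergence_centroAffineField
      ((hu.contDiffAt (hmem x hx)).differentiableAt one_ne_zero) (hDu x hx)
      (hF.contDiffAt (hmem x hx)) (hinv x hx) (hFz x hx) w₁ w₂
  have hsmooth : ContDiffOn ℝ 1 (centroAffineField u F w₁ w₂) {0}ᶜ := fun z hz ↦
    (contDiffAt_centroAffineField (hu.contDiffAt (hmem z hz)) (hF.contDiffAt (hmem z hz))
      (hinv z hz) w₁ w₂).contDiffWithinAt
  have hhom : IsPosHomogeneous (-n) (centroAffineField u F w₁ w₂) := by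
    simpa only [sub_add_cancel] using huh.centroAffineField hFh w₁ w₂
  simpa only [hdiv] using integral_toSphere_divergence_eq_zero μ hE hsmooth hhom

end CentroAffineField

section SupportFunction

variable {E : Type*} [NormedAddCommGroup E] [InnerProductSpace ℝ E] [CompleteSpace E]

lemma contDiffAt_gradient {m : WithTop ℕ∞} {f : E → ℝ} {z : E} (hf : ContDiffAt ℝ (m + 1) f z) :
    ContDiffAt ℝ m (gradient f) z :=
  (InnerProductSpace.toDual ℝ E).symm.contDiff.contDiffAt.comp z (hf.fderiv_right le_rfl)

/-- `h∇h`, the gradient of `h² / 2`. -/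
def legendreMap (h : E → ℝ) (z : E) : E := h z • gradient h z

variable {h : E → ℝ} {z : E}

lemma IsPosHomogeneous.legendreMap (hh : IsPosHomogeneous 1 h) :
    IsPosHomogeneous 1 (legendreMap h) := by
  have hsmul := hh.smul hh.gradient
  rwa [sub_self, add_zero] at hsmul

lemma contDiffAt_legendreMap {m : WithTop ℕ∞} (hd : ContDiffAt ℝ (m + 1) h z) :
    ContDiffAt ℝ m (legendreMap h) z :=
  (hd.of_le le_self_add).smul (contDiffAt_gradient hd)

lemma fderiv_legendreMap (hd : ContDiffAt ℝ 2 h z) :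
    fderiv ℝ (legendreMap h) z = h z • fderiv ℝ (gradient h) z +
      InnerProductSpace.rankOne ℝ (gradient h z) (gradient h z) := by
  have hgrad : DifferentiableAt ℝ (gradient h) z :=
    (contDiffAt_gradient (m := 1) hd).differentiableAt one_ne_zero
  ext1 v
  unfold legendreMap
  rw [fderiv_fun_smul (hd.differentiableAt two_ne_zero) hgrad]
  simp only [add_apply, smul_apply, ContinuousLinearMap.smulRight_apply,
    InnerProductSpace.rankOne_apply, inner_gradient_left]

lemma fderiv_zpow_apply_eq_mul_inner_legendreMap (m : ℤ) (hd : DifferentiableAt ℝ h z)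
    (hhz : h z ≠ 0) (v : E) :
    fderiv ℝ (fun y ↦ h y ^ m) z v = m * h z ^ (m - 2) * ⟪legendreMap h z, v⟫_ℝ := by
  have hpow := (hasDerivAt_zpow m (h z) (.inl hhz)).comp_hasFDerivAt z hd.hasFDerivAt
  rw [show fderiv ℝ (fun y ↦ h y ^ m) z = _ from hpow.fderiv, legendreMap, real_inner_smul_left,
    inner_gradient_left, smul_apply, smul_eq_mul, show m - 1 = m - 2 + 1 by ring,
    zpow_add_one₀ hhz]
  ring

namespace IsPosHomogeneous

lemma inner_gradient_self (hh : IsPosHomogeneous 1 h) (hz : z ≠ 0) (hd : DifferentiableAt ℝ h z) :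
    ⟪gradient h z, z⟫_ℝ = h z := by
  rw [inner_gradient_left, hh.fderiv_self hz hd, Int.cast_one, one_smul]

lemma fderiv_gradient_self (hh : IsPosHomogeneous 1 h) (hz : z ≠ 0) (hd : ContDiffAt ℝ 2 h z) :
    fderiv ℝ (gradient h) z z = 0 := by
  rw [hh.gradient.fderiv_self hz
    ((contDiffAt_gradient (m := 1) hd).differentiableAt one_ne_zero), sub_self, Int.cast_zero,
    zero_smul]

lemma inner_self_fderiv_gradient (hh : IsPosHomogeneous 1 h) (hz : z ≠ 0)
    (hd : ContDiffAt ℝ 2 h z) (v : E) : ⟪z, fderiv ℝ (gradient h) z v⟫_ℝ = 0 := by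
  have hgrad : DifferentiableAt ℝ (gradient h) z :=
    (contDiffAt_gradient (m := 1) hd).differentiableAt one_ne_zero
  have heuler : (fun y ↦ ⟪gradient h y, y⟫_ℝ) =ᶠ[𝓝 z] h := by
    filter_upwards [eventually_ne_nhds hz, hd.eventually (by simp)] with y hy hdy
      using hh.inner_gradient_self hy (hdy.differentiableAt two_ne_zero)
  have hfderiv := DFunLike.congr_fun (heuler.fderiv_eq (𝕜 := ℝ)) v
  rw [fderiv_inner_apply ℝ hgrad differentiableAt_fun_id, fderiv_fun_id,
    ContinuousLinearMap.id_apply, inner_gradient_left] at hfderiv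
  rwa [add_eq_left, real_inner_comm] at hfderiv

lemma inner_legendreMap (hh : IsPosHomogeneous 1 h) (hz : z ≠ 0) (hd : ContDiffAt ℝ 2 h z)
    (v : E) : ⟪_root_.legendreMap h z, v⟫_ℝ = ⟪z, fderiv ℝ (_root_.legendreMap h) z v⟫_ℝ := by
  rw [fderiv_legendreMap hd]
  simp only [_root_.legendreMap, add_apply, smul_apply, InnerProductSpace.rankOne_apply,
    inner_add_right, real_inner_smul_right, real_inner_smul_left,
    hh.inner_self_fderiv_gradient hz hd, real_inner_comm (gradient h z) z,
    hh.inner_gradient_self hz (hd.differentiableAt two_ne_zero)]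
  ring

end IsPosHomogeneous

end SupportFunction

section Curvature

variable {E : Type*} [NormedAddCommGroup E] [InnerProductSpace ℝ E] [FiniteDimensional ℝ E]

open InnerProductSpace (rankOne)

lemma det_one_add_rankOne (v w : E) : (1 + rankOne ℝ v w).det = 1 + ⟪w, v⟫_ℝ :=
  LinearMap.transvection.det (innerₗ E w) v

lemma det_add_rankOne {A : E →L[ℝ] E} {x : E} (hx : ‖x‖ = 1) (hAx : A x = 0)
    (hxA : ∀ v, ⟪x, A v⟫_ℝ = 0) (p q : E) :
    (A + rankOne ℝ p q).det = ⟪x, p⟫_ℝ * ⟪q, x⟫_ℝ * (A + rankOne ℝ x x).det := by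
  have hxx : ⟪x, x⟫_ℝ = 1 := inner_self_eq_one_of_norm_eq_one hx
  have hfactor : A + rankOne ℝ p q =
      (1 + rankOne ℝ (p - x) x) ∘L (A + rankOne ℝ x x) ∘L (1 + rankOne ℝ x (q - x)) := by
    ext1 v
    simp only [add_apply, ContinuousLinearMap.comp_apply, InnerProductSpace.rankOne_apply, map_add,
      map_smul, one_apply_eq_self, hAx, hxA, hxx, inner_zero_right, inner_sub_left]
    module
  rw [hfactor]
  simp only [ContinuousLinearMap.det, ContinuousLinearMap.toLinearMap_comp, LinearMap.det_comp]
  simp only [← ContinuousLinearMap.det.eq_1, det_one_add_rankOne, inner_sub_left, inner_sub_right,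
    hxx, add_sub_cancel]
  ring

/-- The reciprocal Gauss curvature `det (D(∇h)(x) + x ⊗ x)` at the unit vector `x`, where `h`
plays the role of a support function. -/
def recipCurvature (h : E → ℝ) (x : E) : ℝ := (fderiv ℝ (gradient h) x + rankOne ℝ x x).det

variable {h : E → ℝ} {n : ℕ}

lemma det_fderiv_legendreMap_of_norm_eq_one (hE : Module.finrank ℝ E = n + 1)
    (hh : IsPosHomogeneous 1 h) {x : E} (hx : ‖x‖ = 1) (hd : ContDiffAt ℝ 2 h x) (hhx : h x ≠ 0) :
    (fderiv ℝ (legendreMap h) x).det = h x ^ (n + 2) * recipCurvature h x := by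
  have hx₀ : x ≠ 0 := norm_ne_zero_iff.1 (hx ▸ one_ne_zero)
  have hgrad := hh.inner_gradient_self hx₀ (hd.differentiableAt two_ne_zero)
  have hfactor : fderiv ℝ (legendreMap h) x =
      h x • (fderiv ℝ (gradient h) x + rankOne ℝ (gradient h x) ((h x)⁻¹ • gradient h x)) := by
    ext1 v
    simp [fderiv_legendreMap hd, smul_smul, hhx]
  rw [hfactor, ContinuousLinearMap.det, ContinuousLinearMap.toLinearMap_smul, LinearMap.det_smul,
    hE, ← ContinuousLinearMap.det, det_add_rankOne hx (hh.fderiv_gradient_self hx₀ hd)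
    (hh.inner_self_fderiv_gradient hx₀ hd), real_inner_comm, real_inner_smul_left, hgrad,
    inv_mul_cancel₀ hhx, recipCurvature]
  ring

lemma det_fderiv_legendreMap (hE : Module.finrank ℝ E = n + 1)
    (hh : IsPosHomogeneous 1 h) {z : E} (hz : z ≠ 0) (hd : ContDiffOn ℝ 2 h {0}ᶜ)
    (hh₀ : ∀ x : sphere (0 : E) 1, h x ≠ 0) :
    (fderiv ℝ (legendreMap h) z).det
      = h (‖z‖⁻¹ • z) ^ (n + 2) * recipCurvature h (‖z‖⁻¹ • z) := by
  rw [hh.legendreMap.det_fderiv.eq_norm_zpow_smul hz, zpow_zero, one_smul]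
  have hunit : ‖‖z‖⁻¹ • z‖ = 1 := norm_smul_inv_norm (𝕜 := ℝ) hz
  exact det_fderiv_legendreMap_of_norm_eq_one hE hh hunit
    (hd.contDiffAt (isOpen_compl_singleton.mem_nhds (norm_ne_zero_iff.1 (hunit ▸ one_ne_zero))))
    (hh₀ ⟨_, mem_sphere_zero_iff_norm.2 hunit⟩)

/-- The 0-homogeneous extension of `log (h ^ (n + 2) / 𝒦)`, with `h` in the role of a support
function on a space of dimension `n + 1`. No sign is imposed on the argument, `Real.log` being
`log |·|`. -/
def logDensity (n : ℕ) (h : E → ℝ) (z : E) : ℝ :=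
  Real.log (h z ^ (n + 2) * recipCurvature h (‖z‖⁻¹ • z) * ‖z‖ ^ (-((n : ℝ) + 2)))

lemma logDensity_eq_log_det (hE : Module.finrank ℝ E = n + 1)
    (hh : IsPosHomogeneous 1 h) {z : E} (hz : z ≠ 0) (hd : ContDiffOn ℝ 2 h {0}ᶜ)
    (hh₀ : ∀ x : sphere (0 : E) 1, h x ≠ 0) :
    logDensity n h z = Real.log (fderiv ℝ (legendreMap h) z).det := by
  have hnorm : ‖z‖ ^ (-((n : ℝ) + 2)) = (‖z‖ ^ (n + 2))⁻¹ := by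
    rw [rpow_neg (norm_nonneg z), ← Real.rpow_natCast, Nat.cast_add, Nat.cast_two]
  have hz' : ‖z‖ ^ (n + 2) ≠ 0 := pow_ne_zero _ (norm_ne_zero_iff.2 hz)
  rw [logDensity, det_fderiv_legendreMap hE hh hz hd hh₀, hnorm, hh.eq_norm_zpow_smul hz, zpow_one,
    smul_eq_mul, mul_pow]
  congr 1
  field_simp

lemma inner_gradient_logDensity_mul (hE : Module.finrank ℝ E = n + 1) (hd : ContDiffOn ℝ 3 h {0}ᶜ)
    (hh : IsPosHomogeneous 1 h) (hh₀ : ∀ x : sphere (0 : E) 1, h x ≠ 0)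
    (hcurv : ∀ x : sphere (0 : E) 1, recipCurvature h x ≠ 0) (w : E) (x : sphere (0 : E) 1) :
    ⟪gradient (logDensity n h) x, w⟫_ℝ * (h x * recipCurvature h x)
      = h x ^ (-n - 1 : ℤ) * fderiv ℝ (fun y ↦ (fderiv ℝ (legendreMap h) y).det) x w := by
  have hx : (x : E) ≠ 0 := ne_zero_of_mem_unit_sphere x
  have hmem : ({0}ᶜ : Set E) ∈ 𝓝 (x : E) := isOpen_compl_singleton.mem_nhds hx
  have hd₂ : ContDiffOn ℝ 2 h {0}ᶜ := hd.of_le (by norm_num)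
  have hdet : (fderiv ℝ (legendreMap h) x).det = h x ^ (n + 2) * recipCurvature h x :=
    det_fderiv_legendreMap_of_norm_eq_one hE hh (norm_eq_of_mem_sphere x) (hd₂.contDiffAt hmem)
      (hh₀ x)
  have hdiff : DifferentiableAt ℝ (fun y ↦ (fderiv ℝ (legendreMap h) y).det) (x : E) :=
    (contDiffAt_det_fderiv (m := 1) (contDiffAt_legendreMap (hd.contDiffAt hmem))).differentiableAt
      one_ne_zero
  have hlog : logDensity n h =ᶠ[𝓝 (x : E)] fun y ↦ Real.log (fderiv ℝ (legendreMap h) y).det := by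
    filter_upwards [hmem] with y hy using logDensity_eq_log_det hE hh hy hd₂ hh₀
  rw [inner_gradient_left, hlog.fderiv_eq, fderiv.log hdiff
    (hdet ▸ mul_ne_zero (pow_ne_zero _ (hh₀ x)) (hcurv x)), hdet, smul_apply, smul_eq_mul]
  have hhx := hh₀ x
  have hcurvx := hcurv x
  rw [show (-n - 1 : ℤ) = -((n + 1 : ℕ) : ℤ) by push_cast; ring, zpow_neg, zpow_natCast]
  field_simp
  ring

theorem centro_affine_identity_general [MeasurableSpace E] [BorelSpace E] (μ : Measure E)
    [μ.IsAddHaarMeasure] (hE : Module.finrank ℝ E = n + 1) (hd : ContDiffOn ℝ 3 h {0}ᶜ)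
    (hh : IsPosHomogeneous 1 h) (hh₀ : ∀ x : sphere (0 : E) 1, h x ≠ 0)
    (hcurv : ∀ x : sphere (0 : E) 1, recipCurvature h x ≠ 0) (w₁ w₂ : E) :
    ∫ x : sphere (0 : E) 1, ⟪gradient (logDensity n h) x, w₁⟫_ℝ * ⟪(x : E), w₂⟫_ℝ *
      (h x * recipCurvature h x) ∂μ.toSphere = 0 := by
  have hd_at (z : E) (hz : z ≠ 0) : ContDiffAt ℝ 3 h z :=
    hd.contDiffAt (isOpen_compl_singleton.mem_nhds hz)
  have hd₂ (z : E) (hz : z ≠ 0) : ContDiffAt ℝ 2 h z := (hd_at z hz).of_le (by norm_num)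
  have hne (z : E) (hz : z ≠ 0) : h z ≠ 0 := hh.ne_zero_of_sphere hh₀ hz
  have hu : ContDiffOn ℝ 1 (fun y ↦ h y ^ (-n - 1 : ℤ)) {0}ᶜ := fun z hz ↦
    ((analyticAt_id.zpow (hne z hz)).contDiffAt.comp z
      ((hd_at z hz).of_le (by norm_num))).contDiffWithinAt
  have hdet (z : E) (hz : z ≠ 0) : (fderiv ℝ (legendreMap h) z).det ≠ 0 :=
    hh.legendreMap.det_fderiv.ne_zero_of_sphere (fun x ↦ by
      rw [det_fderiv_legendreMap_of_norm_eq_one hE hh (norm_eq_of_mem_sphere x)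
        (hd₂ x (ne_zero_of_mem_unit_sphere x)) (hh₀ x)]
      exact mul_ne_zero (pow_ne_zero _ (hh₀ x)) (hcurv x)) hz
  simp_rw [mul_right_comm _ ⟪_, w₂⟫_ℝ, inner_gradient_logDensity_mul hE hd hh hh₀ hcurv,
    mul_right_comm _ _ ⟪_, w₂⟫_ℝ]
  exact integral_toSphere_mul_fderiv_det_fderiv_eq_zero μ hE hu
    (by simpa only [one_mul] using hh.zpow (-n - 1))
    (fun z hz ↦ fderiv_zpow_apply_eq_mul_inner_legendreMap _
      ((hd₂ z hz).differentiableAt two_ne_zero) (hne z hz))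
    (fun z hz ↦ (contDiffAt_legendreMap (hd_at z hz)).contDiffWithinAt) hh.legendreMap hdet
    (fun z hz ↦ hh.inner_legendreMap hz (hd₂ z hz)) w₁ w₂

end Curvature

section ConvexBody

variable {n : ℕ} {K : Set (Eu n)}

open scoped Pointwise in
lemma isPosHomogeneous_sfn (K : Set (Eu n)) : IsPosHomogeneous 1 (sfn K) := fun c hc z _ ↦ by
  have himage : (fun y ↦ ⟪c • z, y⟫_ℝ) '' K = c • (fun y ↦ ⟪z, y⟫_ℝ) '' K := by
    simp only [← Set.image_smul, Set.image_image, real_inner_smul_left, smul_eq_mul]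
  rw [sfn, himage, Real.sSup_smul_of_nonneg hc.le, zpow_one, sfn]

lemma recipCurvature_sfn_ne_zero (hK : IsSmoothConvexBody K) (x : Sph n) :
    recipCurvature (sfn K) (x : Eu n) ≠ 0 := fun hdet ↦ by
  obtain ⟨v, hv, hv₀⟩ := (Submodule.ne_bot_iff _).1 (LinearMap.bot_lt_ker_of_det_eq_zero hdet).ne'
  have hv' : (hessA K (x : Eu n) + tens (x : Eu n)) v = 0 := hv
  simpa only [hv', inner_zero_left, lt_self_iff_false] using hK.posdef x v hv₀

end ConvexBody

/-- `∫ ∇̄ log(h^{n+2}/𝒦) ⊗ x dV = 0`, i.e. for all `w₁, w₂`: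
`∫ ⟨∇g(x), w₁⟩ ⟨x, w₂⟩ h det(A+x⊗x) dθ = 0`, where `g` is the 0-homogeneous
extension of `log(h^{n+2}/𝒦)`. -/
theorem centro_affine_identity (n : ℕ) (hn : 1 ≤ n)
    (K : Set (Eu n)) (hK : IsSmoothConvexBody K) :
    ∀ w₁ w₂ : Eu n,
      ∫ x : Sph n, ⟪gradient (logEntropyDensity K) (x : Eu n), w₁⟫_ℝ * ⟪(x : Eu n), w₂⟫_ℝ *
          dens K (x : Eu n) ∂sphMeas n = 0 :=
  centro_affine_identity_general volume finrank_euclideanSpace_fin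
    (hK.smooth.of_le (by norm_cast)) (isPosHomogeneous_sfn K)
    (fun x ↦ (hK.pos x).ne') (recipCurvature_sfn_ne_zero hK)
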